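/- arXiv:math/9311208 — 3 statements merged into one kernel-verified Lean document; each statement's English description precedes it below -/
import Mathlib

section
/- Let f : ℝ → ℝ be a continuous function with power growth at infinity, i.e., there exist A > 0 and ρ > 0 such that |f(t)| ≤ A(1 + |t|^ρ) for all t ∈ ℝ, let a_1, …, a_n ∈ ℝ, and set c = Σ_{k=1}^n (−1)^{k−1} C(n−1, k−1) a_k. Then for every Schwartz function φ on ℝ^n whose support is compact and disjoint from every coordinate hyperplane {x ∈ ℝ^n : x_k = 0}, one has ∫_{ℝ^n} (Σ_{k=1}^n a_k f(x_k^*)) φ̂(x) dx = c ∫_{ℝ^n} f(max(|x_1|, …, |x_n|)) φ̂(x) dx. (That is, the Fourier transforms of the distributions Σ_k a_k f(x_k^*) and c·f(max(|x_1|,…,|x_n|)) coincide outside the coordinate planes in ℝ^n.) -/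
/-!
By the maximum-minimums identity, `f (x_k^*)` is a linear combination, with coefficients independent
of `x` and `f`, of the functions `f (max_{j ∈ S} |x j|)`, where `S` runs over the nonempty sets of
indices; the full index set enters with coefficient `(-1)^(k-1) C(n-1, k-1)`. The identity comes
from grouping the sets `S` by the least index they contain, once the coordinates are sorted.

A proper subset `S` contributes nothing to the integral against `φ̂`: if `i ∉ S`, then
`f (max_{j ∈ S} |x j|)` does not depend on `x i`, and by one-dimensional Fourier inversion the
integral of `φ̂` along a line parallel to the `i`-th axis is `2π` times a value of the Fourier
transform of the restriction of `φ` to the hyperplane `x i = 0`. So it is only needed that `φ`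
vanishes on the coordinate hyperplanes.
-/

open MeasureTheory

/-- The non-increasing rearrangement of `(|x 0|, …, |x (n-1)|)`. -/
noncomputable def dstar {n : ℕ} (x : Fin n → ℝ) : Fin n → ℝ :=
  fun i => |x (Tuple.sort (fun j => -|x j|) i)|

/-- `max_{i ∈ s} |x i|` (with the convention `0` for `s = ∅`). -/
noncomputable def maxAbsOn {n : ℕ} (x : Fin n → ℝ) (s : Finset (Fin n)) : ℝ :=
  s.fold max 0 (fun i => |x i|)

/-- The Fourier transform `φ̂(ξ) = ∫ e^{i⟨x,ξ⟩} φ(x) dx` on `ℝⁿ`. -/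
noncomputable def ftransform {n : ℕ} (φ : (Fin n → ℝ) → ℂ) (ξ : Fin n → ℝ) : ℂ :=
  ∫ x : Fin n → ℝ, Complex.exp (Complex.I * ((∑ i, x i * ξ i : ℝ) : ℂ)) * φ x

section BinomialInversion

open Finset

lemma sum_powerset_neg_one_pow_mul_choose {α R : Type*} [CommRing R] (s : Finset α) (k : ℕ) :
    ∑ t ∈ s.powerset, ((-1 : R) ^ (#t - k) * (#t).choose k) = if k = #s then 1 else 0 := by
  -- Both sides are the coefficient of `X ^ k` in `((X - 1) + 1) ^ #s = X ^ #s`.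
  have h := sum_pow_mul_eq_add_pow (Polynomial.X + Polynomial.C (-1 : R)) 1 s
  have hX : Polynomial.X + Polynomial.C (-1 : R) + 1 = Polynomial.X := by simp
  simpa [hX, Polynomial.finsetSum_coeff, Polynomial.coeff_X_pow, Polynomial.coeff_X_add_C_pow,
    -map_neg] using congrArg (fun p : Polynomial R => p.coeff k) h

variable {α : Type*} [LinearOrder α] [LocallyFiniteOrderTop α]

lemma card_Ioi_inj {i j : α} : #(Ioi i) = #(Ioi j) ↔ i = j := by
  have hanti : StrictAnti fun i : α => #(Ioi i) := fun i j hij => card_lt_card (Ioi_ssubset_Ioi hij)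
  exact hanti.injective.eq_iff

lemma notMem_of_mem_powerset_Ioi {i : α} {T : Finset α} (hT : T ∈ (Ioi i).powerset) : i ∉ T :=
  fun h => notMem_Ioi_self (mem_powerset.1 hT h)

lemma isLeast_insert_of_mem_powerset_Ioi {i : α} {T : Finset α} (hT : T ∈ (Ioi i).powerset) :
    IsLeast (insert i T : Finset α) i := by
  refine ⟨mem_insert_self i T, fun j hj => ?_⟩
  obtain rfl | hj := mem_insert.1 hj
  exacts [le_rfl, (mem_Ioi.1 (mem_powerset.1 hT hj)).le]

lemma sum_nonempty_eq_sum_powerset_Ioi [Fintype α] {M : Type*} [AddCommMonoid M]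
    (F : Finset α → M) :
    ∑ S with S.Nonempty, F S = ∑ i, ∑ T ∈ (Ioi i).powerset, F (insert i T) := by
  rw [sum_sigma']
  refine sum_bij'
    (fun S hS => ⟨S.min' (mem_filter.1 hS).2, S.erase (S.min' (mem_filter.1 hS).2)⟩)
    (fun p _ => insert p.1 p.2) (fun S hS => ?_) (fun p _ => by simp)
    (fun S hS => insert_erase (S.min'_mem (mem_filter.1 hS).2)) (fun p hp => ?_)
    (fun S hS => by rw [insert_erase (S.min'_mem (mem_filter.1 hS).2)])
  · refine mem_sigma.2 ⟨mem_univ _, mem_powerset.2 fun j hj => mem_Ioi.2 ?_⟩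
    exact S.min'_lt_of_mem_erase_min' _ hj
  · have hT := (mem_sigma.1 hp).2
    have hmin : (insert p.1 p.2).min' (insert_nonempty _ _) = p.1 :=
      (isLeast_min' _ _).unique (isLeast_insert_of_mem_powerset_Ioi hT)
    simp only [hmin, erase_insert (notMem_of_mem_powerset_Ioi hT)]

lemma sum_nonempty_eq_of_isLeast [Fintype α] {R : Type*} [CommRing R] {g : Finset α → R}
    {y : α → R} (hg : ∀ (S : Finset α) (i : α), IsLeast S i → g S = y i) (i : α) :
    ∑ S with S.Nonempty, (-1) ^ (#S - 1 - #(Ioi i)) * ((#S - 1).choose #(Ioi i)) * g S = y i := by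
  calc ∑ S with S.Nonempty, (-1) ^ (#S - 1 - #(Ioi i)) * ((#S - 1).choose #(Ioi i)) * g S
      = ∑ j, ∑ T ∈ (Ioi j).powerset, (-1) ^ (#T - #(Ioi i)) * ((#T).choose #(Ioi i)) * y j := by
        rw [sum_nonempty_eq_sum_powerset_Ioi]
        refine sum_congr rfl fun j _ => sum_congr rfl fun T hT => ?_
        rw [card_insert_of_notMem (notMem_of_mem_powerset_Ioi hT), Nat.add_sub_cancel,
          hg _ j (isLeast_insert_of_mem_powerset_Ioi hT)]
    _ = ∑ j, (if i = j then 1 else 0) * y j := by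
        simp only [← sum_mul, sum_powerset_neg_one_pow_mul_choose, card_Ioi_inj]
    _ = y i := by simp

end BinomialInversion

section OrderStatistics

variable {n : ℕ}

lemma maxAbsOn_le_iff {x : Fin n → ℝ} {S : Finset (Fin n)} {c : ℝ} :
    maxAbsOn x S ≤ c ↔ 0 ≤ c ∧ ∀ i ∈ S, |x i| ≤ c :=
  Finset.fold_max_le c

lemma abs_le_maxAbsOn (x : Fin n → ℝ) {S : Finset (Fin n)} {i : Fin n} (hi : i ∈ S) :
    |x i| ≤ maxAbsOn x S :=
  (maxAbsOn_le_iff.1 le_rfl).2 i hi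

lemma abs_maxAbsOn_le_norm (x : Fin n → ℝ) (S : Finset (Fin n)) : |maxAbsOn x S| ≤ ‖x‖ := by
  rw [abs_of_nonneg (maxAbsOn_le_iff.1 le_rfl).1]
  exact maxAbsOn_le_iff.2 ⟨norm_nonneg x, fun i _ => norm_le_pi_norm x i⟩

lemma dependsOn_maxAbsOn (S : Finset (Fin n)) : DependsOn (fun x => maxAbsOn x S) S :=
  fun _ _ h => Finset.fold_congr fun i hi => by rw [h i hi]

lemma continuous_maxAbsOn (S : Finset (Fin n)) : Continuous fun x => maxAbsOn x S := by
  induction S using Finset.induction_on with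
  | empty => exact continuous_const
  | insert i S hi ih =>
    simp only [maxAbsOn, Finset.fold_insert hi]
    exact (continuous_apply i).abs.max ih

lemma antitone_dstar (x : Fin n → ℝ) : Antitone (dstar x) := fun _ _ hij =>
  neg_le_neg_iff.1 (Tuple.monotone_sort (fun j => -|x j|) hij)

lemma maxAbsOn_map_sort (x : Fin n → ℝ) {S : Finset (Fin n)} {i : Fin n}
    (hi : IsLeast (S : Set (Fin n)) i) :
    maxAbsOn x (S.map (Tuple.sort fun j => -|x j|).toEmbedding) = dstar x i := by
  refine le_antisymm (maxAbsOn_le_iff.2 ⟨abs_nonneg _, ?_⟩)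
    (abs_le_maxAbsOn x (Finset.mem_map_of_mem _ hi.1))
  rw [Finset.forall_mem_map]
  exact fun j hj => antitone_dstar x (hi.2 hj)

open Finset in
/-- The maximum-minimums identity for order statistics. The truncated subtractions are harmless: `S`
is nonempty, and the binomial coefficient vanishes where the exponent of `-1` would be negative. -/
lemma apply_dstar_eq_sum {R : Type*} [CommRing R] (f : ℝ → R) (x : Fin n → ℝ) (i : Fin n) :
    f (dstar x i) = ∑ S with S.Nonempty,
      (-1) ^ (#S - 1 - #(Ioi i)) * ((#S - 1).choose #(Ioi i)) * f (maxAbsOn x S) := by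
  set σ := Tuple.sort fun j => -|x j|
  rw [← sum_nonempty_eq_of_isLeast (g := fun S => f (maxAbsOn x (S.map σ.toEmbedding)))
    (y := fun j => f (dstar x j)) (fun S j hj => congrArg f (maxAbsOn_map_sort x hj)) i]
  exact sum_equiv (Equiv.finsetCongr σ) (by simp) (by simp)

end OrderStatistics

section Schwartz

open scoped SchwartzMap

variable {D : Type*} [NormedAddCommGroup D] [MeasurableSpace D]

lemma exists_integrable_norm_schwartz_le {E V : Type*} [NormedAddCommGroup E] [NormedSpace ℝ E]
    [NormedAddCommGroup V] [NormedSpace ℝ V] (μ : Measure D) [μ.HasTemperateGrowth] (φ : 𝓢(E, V)) :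
    ∃ b : D → ℝ, Integrable b μ ∧ ∀ (x : E) (z : D), ‖z‖ ≤ ‖x‖ → ‖φ x‖ ≤ b z := by
  obtain ⟨k, hk⟩ := ‹μ.HasTemperateGrowth›.exists_integrable
  obtain ⟨C, hC⟩ : ∃ C, ∀ x, (1 + ‖x‖) ^ k * ‖φ x‖ ≤ C := ⟨_, fun x => by
    simpa using φ.one_add_le_sup_seminorm_apply (𝕜 := ℝ) (m := (k, 0)) le_rfl le_rfl x⟩
  refine ⟨fun z => C * (1 + ‖z‖) ^ (-(k : ℝ)), hk.const_mul C, fun x z hzx => ?_⟩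
  change ‖φ x‖ ≤ C * (1 + ‖z‖) ^ (-(k : ℝ))
  rw [Real.rpow_neg (by positivity), Real.rpow_natCast, ← div_eq_mul_inv,
    le_div_iff₀ (by positivity), mul_comm]
  exact (mul_le_mul_of_nonneg_right (by gcongr) (norm_nonneg _)).trans (hC x)

lemma rpow_le_one_add_pow_ceil {r ρ : ℝ} (hr : 0 ≤ r) (hρ : 0 ≤ ρ) : r ^ ρ ≤ 1 + r ^ ⌈ρ⌉₊ := by
  rcases le_total r 1 with h | h
  · linarith [Real.rpow_le_one hr h hρ, pow_nonneg hr ⌈ρ⌉₊]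
  · have := Real.rpow_le_rpow_of_exponent_le h (Nat.le_ceil ρ)
    rw [Real.rpow_natCast] at this
    linarith

lemma integrable_comp_mul_schwartz [NormedSpace ℝ D] [BorelSpace D] [SecondCountableTopology D]
    {R : Type*} [NormedRing R] [NormedSpace ℝ R] {f : ℝ → R} (hf : StronglyMeasurable f)
    {A ρ : ℝ} (hρ : 0 ≤ ρ) (hgrowth : ∀ t, ‖f t‖ ≤ A * (1 + |t| ^ ρ))
    {N : D → ℝ} (hN : Measurable N) (hle : ∀ x, |N x| ≤ ‖x‖)
    (μ : Measure D) [μ.HasTemperateGrowth] (φ : 𝓢(D, R)) :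
    Integrable (fun x => f (N x) * φ x) μ := by
  have hA : 0 ≤ A := nonneg_of_mul_nonneg_left
    ((norm_nonneg _).trans (hgrowth 0)) (by positivity)
  have hdom : Integrable (fun x => A * (2 * ‖φ x‖ + ‖x‖ ^ ⌈ρ⌉₊ * ‖φ x‖)) μ :=
    ((φ.integrable.norm.const_mul 2).add (φ.integrable_pow_mul μ ⌈ρ⌉₊)).const_mul A
  refine hdom.mono' ((hf.comp_measurable hN).aestronglyMeasurable.mul
    φ.continuous.aestronglyMeasurable) (.of_forall fun x => ?_)
  calc ‖f (N x) * φ x‖ ≤ ‖f (N x)‖ * ‖φ x‖ := norm_mul_le _ _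
    _ ≤ A * (1 + (1 + ‖x‖ ^ ⌈ρ⌉₊)) * ‖φ x‖ := by
      grw [hgrowth, hle, rpow_le_one_add_pow_ceil (norm_nonneg x) hρ]
    _ = A * (2 * ‖φ x‖ + ‖x‖ ^ ⌈ρ⌉₊ * ‖φ x‖) := by ring

end Schwartz

section Slices

variable {m : ℕ} {E : Type*} [NormedAddCommGroup E]

lemma abs_le_norm_insertNth (i : Fin (m + 1)) (t : ℝ) (y : Fin m → ℝ) :
    |t| ≤ ‖(i.insertNth t y : Fin (m + 1) → ℝ)‖ := by
  simpa using norm_le_pi_norm (i.insertNth t y : Fin (m + 1) → ℝ) i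

lemma norm_le_norm_insertNth (i : Fin (m + 1)) (t : ℝ) (y : Fin m → ℝ) :
    ‖y‖ ≤ ‖(i.insertNth t y : Fin (m + 1) → ℝ)‖ :=
  (pi_norm_le_iff_of_nonneg (norm_nonneg _)).2 fun j => by
    simpa using norm_le_pi_norm (i.insertNth t y : Fin (m + 1) → ℝ) (i.succAbove j)

lemma integrable_insertNth (i : Fin (m + 1)) {F : (Fin (m + 1) → ℝ) → E} (hF : Integrable F) :
    Integrable fun p : ℝ × (Fin m → ℝ) => F (i.insertNth p.1 p.2) :=
  ((volume_preserving_piFinSuccAbove (fun _ => ℝ) i).symm.integrable_comp_emb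
    (MeasurableEquiv.piFinSuccAbove (fun _ => ℝ) i).symm.measurableEmbedding).2 hF

lemma integral_insertNth [NormedSpace ℝ E] (i : Fin (m + 1)) (F : (Fin (m + 1) → ℝ) → E) :
    ∫ p : ℝ × (Fin m → ℝ), F (i.insertNth p.1 p.2) = ∫ x, F x :=
  (volume_preserving_piFinSuccAbove (fun _ => ℝ) i).symm.integral_comp' F

end Slices

section FourierTransform

open scoped FourierTransform SchwartzMap

variable {n m : ℕ}

lemma ftransform_eq_fourier (φ : (Fin n → ℝ) → ℂ) (ξ : Fin n → ℝ) :
    ftransform φ ξ = 𝓕 (fun v : EuclideanSpace ℝ (Fin n) => φ v.ofLp)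
      (-(2 * Real.pi)⁻¹ • WithLp.toLp 2 ξ) := by
  rw [Real.fourier_eq', ftransform,
    ← (PiLp.volume_preserving_toLp (Fin n)).integral_comp
      (MeasurableEquiv.toLp 2 (Fin n → ℝ)).measurableEmbedding]
  congr! 3
  have h2π : -2 * Real.pi * -(2 * Real.pi)⁻¹ = 1 := by field_simp
  rw [real_inner_smul_right, ← mul_assoc, h2π, one_mul, mul_comm]
  simp [PiLp.inner_apply, mul_comm]

lemma exists_schwartz_eq_ftransform (φ : 𝓢(Fin n → ℝ, ℂ)) :
    ∃ Φ : 𝓢(Fin n → ℝ, ℂ), ⇑Φ = ftransform φ := by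
  let e := EuclideanSpace.equiv (Fin n) ℝ
  let u : ℝˣ := Units.mk0 (-(2 * Real.pi)⁻¹) (by simp [Real.pi_ne_zero])
  refine ⟨SchwartzMap.compCLMOfContinuousLinearEquiv ℂ
    (e.symm.trans (ContinuousLinearEquiv.smulLeft u))
    (𝓕 (SchwartzMap.compCLMOfContinuousLinearEquiv ℂ e φ)), ?_⟩
  ext ξ
  exact (ftransform_eq_fourier φ ξ).symm

lemma integral_integral_exp_mul_eq {ψ : ℝ → ℂ} (hψ : Integrable ψ) (h0 : ContinuousAt ψ 0)
    (hint : Integrable fun t : ℝ => ∫ s : ℝ, Complex.exp (Complex.I * (s * t : ℝ)) * ψ s) :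
    ∫ t : ℝ, ∫ s : ℝ, Complex.exp (Complex.I * (s * t : ℝ)) * ψ s = 2 * Real.pi * ψ 0 := by
  set g : ℝ → ℂ := fun t => ∫ s : ℝ, Complex.exp (Complex.I * (s * t : ℝ)) * ψ s
  have hF : 𝓕 ψ = fun w => g (-(2 * Real.pi) * w) := by
    ext w
    rw [Real.fourier_eq']
    congr! 3
    rw [mul_comm, mul_left_comm]
    simp [mul_comm]
  have hFi : Integrable (𝓕 ψ) := hF ▸ hint.comp_mul_left' (by simp [Real.pi_ne_zero])
  have hinv := hψ.fourierInv_fourier_eq hFi h0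
  rw [Real.fourierInv_eq] at hinv
  simp only [inner_zero_right, AddChar.map_zero_eq_one, one_smul] at hinv
  rw [hF, Measure.integral_comp_mul_left] at hinv
  simp [← hinv, abs_of_pos Real.pi_pos, ← mul_assoc, Real.pi_ne_zero]

lemma norm_exp_I_mul_mul (r : ℝ) (z : ℂ) : ‖Complex.exp (Complex.I * r) * z‖ = ‖z‖ := by
  rw [norm_mul, mul_comm, mul_comm Complex.I, Complex.norm_exp_ofReal_mul_I, mul_one]

lemma integrable_exp_I_mul_mul {X : Type*} [TopologicalSpace X] [MeasurableSpace X]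
    [OpensMeasurableSpace X] {μ : Measure X} {r : X → ℝ} (hr : Continuous r)
    {φ : X → ℂ} (hφ : Integrable φ μ) :
    Integrable (fun x => Complex.exp (Complex.I * r x) * φ x) μ := by
  refine hφ.norm.mono' (AEStronglyMeasurable.mul ?_ hφ.1) (.of_forall fun x => ?_)
  · exact Continuous.aestronglyMeasurable (by fun_prop)
  · rw [norm_exp_I_mul_mul]

lemma exp_I_mul_sum_insertNth (i : Fin (m + 1)) (s t : ℝ) (z y : Fin m → ℝ) :
    Complex.exp (Complex.I * ((∑ j, (i.insertNth s z : Fin (m + 1) → ℝ) j *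
      (i.insertNth t y : Fin (m + 1) → ℝ) j : ℝ) : ℂ)) =
      Complex.exp (Complex.I * (s * t : ℝ)) * Complex.exp (Complex.I * (∑ j, z j * y j : ℝ)) := by
  rw [Fin.sum_univ_succAbove _ i, ← Complex.exp_add, ← mul_add, ← Complex.ofReal_add]
  simp only [Fin.insertNth_apply_same, Fin.insertNth_apply_succAbove]

lemma integrable_ftransform_slice {φ : (Fin (m + 1) → ℝ) → ℂ} (hφ : Integrable φ)
    (i : Fin (m + 1)) (y : Fin m → ℝ) :
    Integrable fun s => ftransform (fun z => φ (i.insertNth s z)) y :=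
  (integrable_exp_I_mul_mul (r := fun p : ℝ × (Fin m → ℝ) => ∑ j, p.2 j * y j) (by fun_prop)
    (integrable_insertNth i hφ)).integral_prod_left

lemma ftransform_insertNth {φ : (Fin (m + 1) → ℝ) → ℂ} (hφ : Integrable φ) (i : Fin (m + 1))
    (t : ℝ) (y : Fin m → ℝ) :
    ftransform φ (i.insertNth t y) = ∫ s : ℝ, Complex.exp (Complex.I * (s * t : ℝ)) *
      ftransform (fun z => φ (i.insertNth s z)) y := by
  have hint := integrable_insertNth i (integrable_exp_I_mul_mul
    (r := fun x => ∑ j, x j * (i.insertNth t y : Fin (m + 1) → ℝ) j) (by fun_prop) hφ)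
  rw [ftransform, ← integral_insertNth i]
  refine (integral_prod _ hint).trans ?_
  simp only [exp_I_mul_sum_insertNth, mul_assoc, integral_const_mul, ftransform]

lemma continuous_ftransform_slice (φ : 𝓢(Fin (m + 1) → ℝ, ℂ)) (i : Fin (m + 1))
    (y : Fin m → ℝ) : Continuous fun s => ftransform (fun z => φ (i.insertNth s z)) y := by
  obtain ⟨b, hb, hle⟩ := exists_integrable_norm_schwartz_le (volume : Measure (Fin m → ℝ)) φ
  have hins : Continuous fun p : ℝ × (Fin m → ℝ) => (i.insertNth p.1 p.2 : Fin (m + 1) → ℝ) :=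
    Continuous.finInsertNth (A := fun _ => ℝ) i continuous_fst continuous_snd
  have hφ := φ.continuous.comp hins
  refine continuous_of_dominated (bound := b) (fun s => ?_) (fun s => .of_forall fun z => ?_) hb
    (.of_forall fun z => ?_)
  · have := hφ.comp (Continuous.prodMk_right s)
    exact Continuous.aestronglyMeasurable (by fun_prop)
  · rw [norm_exp_I_mul_mul]
    exact hle _ z (norm_le_norm_insertNth i s z)
  · exact continuous_const.mul (hφ.comp (Continuous.prodMk_left z))

lemma integrable_schwartz_insertNth (φ : 𝓢(Fin (m + 1) → ℝ, ℂ)) (i : Fin (m + 1))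
    (y : Fin m → ℝ) : Integrable fun t => φ (i.insertNth t y) := by
  obtain ⟨b, hb, hle⟩ := exists_integrable_norm_schwartz_le (volume : Measure ℝ) φ
  have hcont := φ.continuous.comp (continuous_id.finInsertNth i (continuous_const (y := y)))
  exact hb.mono' hcont.aestronglyMeasurable
    (.of_forall fun t => hle _ t (abs_le_norm_insertNth i t y))

lemma integral_ftransform_insertNth (φ : 𝓢(Fin (m + 1) → ℝ, ℂ)) (i : Fin (m + 1))
    (y : Fin m → ℝ) :
    ∫ t, ftransform φ (i.insertNth t y) =
      2 * Real.pi * ftransform (fun z => φ (i.insertNth 0 z)) y := by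
  obtain ⟨Φ, hΦ⟩ := exists_schwartz_eq_ftransform φ
  have hline := integrable_schwartz_insertNth Φ i y
  simp only [hΦ, ftransform_insertNth φ.integrable] at hline ⊢
  exact integral_integral_exp_mul_eq (integrable_ftransform_slice φ.integrable i y)
    (continuous_ftransform_slice φ i y).continuousAt hline

lemma integral_mul_ftransform_eq_zero {h : (Fin n → ℝ) → ℂ} {i : Fin n} (hh : DependsOn h {i}ᶜ)
    {φ : 𝓢(Fin n → ℝ, ℂ)} (hint : Integrable fun x => h x * ftransform φ x)
    (hφ : ∀ x, x i = 0 → φ x = 0) :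
    ∫ x, h x * ftransform φ x = 0 := by
  obtain _ | m := n
  · exact i.elim0
  have hconst (t : ℝ) (y : Fin m → ℝ) : h (i.insertNth t y) = h (i.insertNth 0 y) :=
    hh fun j hj => by
      obtain ⟨k, rfl⟩ := Fin.exists_succAbove_eq hj
      simp only [Fin.insertNth_apply_succAbove]
  have hslice (y : Fin m → ℝ) : ftransform (fun z => φ (i.insertNth 0 z)) y = 0 := by
    simp [ftransform, hφ]
  rw [← integral_insertNth i]
  refine (integral_prod_symm _ (integrable_insertNth i hint)).trans ?_
  simp only [hconst, integral_const_mul, integral_ftransform_insertNth, hslice, mul_zero,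
    integral_zero]

end FourierTransform

section OrderStatisticsIntegral

open scoped SchwartzMap

variable {n : ℕ} {f : ℝ → ℂ} {A ρ : ℝ} {φ : 𝓢(Fin n → ℝ, ℂ)}

lemma integrable_comp_maxAbsOn_mul_ftransform (hf : Measurable f) (hρ : 0 ≤ ρ)
    (hgrowth : ∀ t, ‖f t‖ ≤ A * (1 + |t| ^ ρ)) (φ : 𝓢(Fin n → ℝ, ℂ)) (S : Finset (Fin n)) :
    Integrable fun x => f (maxAbsOn x S) * ftransform φ x := by
  obtain ⟨Φ, hΦ⟩ := exists_schwartz_eq_ftransform φ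
  simpa only [hΦ] using integrable_comp_mul_schwartz hf.stronglyMeasurable hρ hgrowth
    (continuous_maxAbsOn S).measurable (abs_maxAbsOn_le_norm · S) volume Φ

lemma integral_comp_maxAbsOn_mul_ftransform_eq_zero (hf : Measurable f) (hρ : 0 ≤ ρ)
    (hgrowth : ∀ t, ‖f t‖ ≤ A * (1 + |t| ^ ρ)) (hφ : ∀ x k, x k = 0 → φ x = 0)
    {S : Finset (Fin n)} (hS : S ≠ Finset.univ) :
    ∫ x, f (maxAbsOn x S) * ftransform φ x = 0 := by
  obtain ⟨i, hi⟩ : ∃ i, i ∉ S := by simpa [Finset.eq_univ_iff_forall] using hS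
  have hdep : DependsOn (fun x => f (maxAbsOn x S)) {i}ᶜ := fun x y hxy =>
    congrArg f (dependsOn_maxAbsOn S fun j hj => hxy j (ne_of_mem_of_not_mem hj hi))
  exact integral_mul_ftransform_eq_zero hdep
    (integrable_comp_maxAbsOn_mul_ftransform hf hρ hgrowth φ S) (hφ · i)

lemma integrable_comp_dstar_mul_ftransform (hf : Measurable f) (hρ : 0 ≤ ρ)
    (hgrowth : ∀ t, ‖f t‖ ≤ A * (1 + |t| ^ ρ)) (φ : 𝓢(Fin n → ℝ, ℂ)) (i : Fin n) :
    Integrable fun x => f (dstar x i) * ftransform φ x := by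
  simp only [apply_dstar_eq_sum f, Finset.sum_mul, mul_assoc _ (f _)]
  exact integrable_finsetSum _ fun S _ =>
    (integrable_comp_maxAbsOn_mul_ftransform hf hρ hgrowth φ S).const_mul _

lemma integral_comp_dstar_mul_ftransform (hf : Measurable f) (hρ : 0 ≤ ρ)
    (hgrowth : ∀ t, ‖f t‖ ≤ A * (1 + |t| ^ ρ)) (hφ : ∀ x k, x k = 0 → φ x = 0) (i : Fin n) :
    ∫ x, f (dstar x i) * ftransform φ x =
      (-1) ^ (i : ℕ) * ((n - 1).choose i) * ∫ x, f (maxAbsOn x Finset.univ) * ftransform φ x := by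
  have hi : (i : ℕ) ≤ n - 1 := by omega
  simp only [apply_dstar_eq_sum f, Finset.sum_mul, mul_assoc _ (f _)]
  rw [integral_finsetSum _ fun S _ =>
    (integrable_comp_maxAbsOn_mul_ftransform hf hρ hgrowth φ S).const_mul _]
  simp only [integral_const_mul]
  rw [Finset.sum_eq_single_of_mem Finset.univ (by simpa using ⟨i, Finset.mem_univ i⟩)
    fun S _ hS => by
      rw [integral_comp_maxAbsOn_mul_ftransform_eq_zero hf hρ hgrowth hφ hS, mul_zero]]
  rw [Fin.card_Ioi, Finset.card_univ, Fintype.card_fin, Nat.sub_sub_self hi, Nat.choose_symm hi]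

lemma sum_Icc_one_eq_sum_fin {M : Type*} [AddCommMonoid M] (g : ℕ → M) (n : ℕ) :
    ∑ k ∈ Finset.Icc 1 n, g k = ∑ i : Fin n, g (i + 1) := by
  rw [Fin.sum_univ_eq_sum_range (fun i => g (i + 1)), Finset.range_eq_Ico, Finset.sum_Ico_add']
  rfl

theorem stmt13_general {n : ℕ} {f : ℝ → ℂ} (hf : Measurable f) {A ρ : ℝ} (hρ : 0 ≤ ρ)
    (hgrowth : ∀ t, ‖f t‖ ≤ A * (1 + |t| ^ ρ)) (a : ℕ → ℂ) {φ : 𝓢(Fin n → ℝ, ℂ)}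
    (hφ : ∀ x k, x k = 0 → φ x = 0) :
    ∫ x, (∑ i : Fin n, a (i + 1) * f (dstar x i)) * ftransform φ x =
      (∑ k ∈ Finset.Icc 1 n, (-1) ^ (k - 1) * ((n - 1).choose (k - 1)) * a k) *
        ∫ x, f (maxAbsOn x Finset.univ) * ftransform φ x := by
  simp only [Finset.sum_mul, mul_assoc (a _)]
  rw [integral_finsetSum _ fun i _ =>
      (integrable_comp_dstar_mul_ftransform hf hρ hgrowth φ i).const_mul _,
    sum_Icc_one_eq_sum_fin]
  refine Finset.sum_congr rfl fun i _ => ?_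
  rw [integral_const_mul, integral_comp_dstar_mul_ftransform hf hρ hgrowth hφ,
    Nat.add_sub_cancel]
  ring

end OrderStatisticsIntegral

/-- Proposition 1: the Fourier transforms of the distributions `∑ aₖ f(xₖ^*)`
and `c·f(max(|x₁|,…,|x_n|))`, `c = ∑ (−1)^{k−1} C(n−1,k−1) aₖ`, agree outside
the coordinate planes. -/
theorem stmt13 (n : ℕ) (f : ℝ → ℝ) (hf : Continuous f)
    (hgrowth : ∃ A ρ : ℝ, 0 < A ∧ 0 < ρ ∧ ∀ t : ℝ, |f t| ≤ A * (1 + |t| ^ ρ))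
    (a : ℕ → ℝ)
    (φ : SchwartzMap (Fin n → ℝ) ℂ) (hφ : HasCompactSupport ⇑φ)
    (hsupp : tsupport ⇑φ ⊆ {x : Fin n → ℝ | ∀ k, x k ≠ 0}) :
    ∫ x : Fin n → ℝ,
        ((∑ i : Fin n, a (i.1 + 1) * f (dstar x i) : ℝ) : ℂ) * ftransform (⇑φ) x =
      ((∑ k ∈ Finset.Icc 1 n,
          (-1 : ℝ) ^ (k - 1) * ((n - 1).choose (k - 1)) * a k : ℝ) : ℂ) *
        ∫ x : Fin n → ℝ,
          ((f (maxAbsOn x Finset.univ) : ℝ) : ℂ) * ftransform (⇑φ) x := by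
  obtain ⟨A, ρ, -, hρ, hgrowth⟩ := hgrowth
  have hzero : ∀ x k, x k = 0 → φ x = 0 := fun x k hk =>
    image_eq_zero_of_notMem_tsupport fun hx => hsupp hx k hk
  simpa using stmt13_general (Complex.measurable_ofReal.comp hf.measurable) hρ.le
    (by simpa using hgrowth) (fun k => a k) hzero
end

section
/- Let q > 0 be a real number that is not an even integer, and define F_q : G → ℝ (G ⊂ ℝ³) by F_q(ξ₁,ξ₂,ξ₃) = −(c_q/(2ξ₁ξ₂ξ₃)) ( |ξ₁+ξ₂+ξ₃|^{−q} sgn(ξ₁+ξ₂+ξ₃) − |ξ₁+ξ₂−ξ₃|^{−q} sgn(ξ₁+ξ₂−ξ₃) − |ξ₁−ξ₂+ξ₃|^{−q} sgn(ξ₁−ξ₂+ξ₃) + |ξ₁−ξ₂−ξ₃|^{−q} sgn(ξ₁−ξ₂−ξ₃) ). Then F_q changes sign on G; in fact the points (3,1,1) and (3,2,2) lie in G and F_q(3,1,1) · F_q(3,2,2) < 0. -/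
/-!
Let `f x = |x|^{-q} sgn x`. The bracket in `F_q` is the mixed second difference
`f (ξ₁+ξ₂+ξ₃) - f (ξ₁+ξ₂-ξ₃) - f (ξ₁-ξ₂+ξ₃) + f (ξ₁-ξ₂-ξ₃)`. If `ξ₁ > ξ₂ + ξ₃` with `ξ₂, ξ₃ > 0`,
all four arguments lie in `(0, ∞)`, where `f` is strictly convex, so the bracket is positive. If the
`ξₖ` satisfy the strict triangle inequalities, then the last argument is negative; as `f` is odd,
positive and decreasing on `(0, ∞)`, the first term is at most the subtracted second one and the
remaining two are negative, so the bracket is negative. The point `(3,1,1)` lies in the first region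
and `(3,2,2)` in the second.
-/

/-- The set `G ⊂ ℝ³` of `ξ` with all `ξ k ≠ 0` and `δ₁ξ₁ + δ₂ξ₂ + δ₃ξ₃ ≠ 0`
for all choices of signs `δₖ = ±1`. -/
def Gset3 : Set (Fin 3 → ℝ) :=
  {ξ | (∀ k, ξ k ≠ 0) ∧
    ∀ δ : Fin 3 → Bool, (∑ i, (if δ i then (1:ℝ) else -1) * ξ i) ≠ 0}

/-- The constant `c_q = 2^{q+1} π^{1/2} Γ((q+1)/2) / Γ(−q/2)`. -/
noncomputable def cq (q : ℝ) : ℝ :=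
  2 ^ (q + 1) * Real.sqrt Real.pi * Real.Gamma ((q + 1) / 2) / Real.Gamma (-q / 2)

/-- The function `F_q` of Corollary 1. -/
noncomputable def Fq (q : ℝ) (ξ : Fin 3 → ℝ) : ℝ :=
  -(cq q / (2 * (ξ 0 * ξ 1 * ξ 2))) *
    (|ξ 0 + ξ 1 + ξ 2| ^ (-q) * Real.sign (ξ 0 + ξ 1 + ξ 2)
      - |ξ 0 + ξ 1 - ξ 2| ^ (-q) * Real.sign (ξ 0 + ξ 1 - ξ 2)
      - |ξ 0 - ξ 1 + ξ 2| ^ (-q) * Real.sign (ξ 0 - ξ 1 + ξ 2)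
      + |ξ 0 - ξ 1 - ξ 2| ^ (-q) * Real.sign (ξ 0 - ξ 1 - ξ 2))

section MixedDiff

/-- The mixed second difference of `f` at `x`, with central increments `y` and `z` (of total
lengths `2 * y` and `2 * z`). It turns the bracket in `F_q` into an operation on one function. -/
def mixedDiff {α β : Type*} [AddCommGroup α] [AddCommGroup β] (f : α → β) (x y z : α) : β :=
  f (x + y + z) - f (x + y - z) - f (x - y + z) + f (x - y - z)

variable {𝕜 : Type*} [Field 𝕜] [LinearOrder 𝕜] [IsStrictOrderedRing 𝕜] {f : 𝕜 → 𝕜} {x y z : 𝕜}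

-- The two inner arguments are convex combinations of the two outer ones, with swapped weights.
theorem mixedDiff_pos_of_strictConvexOn {s : Set 𝕜} (hf : StrictConvexOn 𝕜 s f)
    (hy : 0 < y) (hz : 0 < z) (hsub : x - y - z ∈ s) (hadd : x + y + z ∈ s) :
    0 < mixedDiff f x y z := by
  have hyz : 0 < y + z := add_pos hy hz
  have hne : x - y - z ≠ x + y + z := by linarith
  have hwy : 0 < y / (y + z) := div_pos hy hyz
  have hwz : 0 < z / (y + z) := div_pos hz hyz
  have hw : y / (y + z) + z / (y + z) = 1 := by field_simp
  have hyz_comb : z / (y + z) * (x - y - z) + y / (y + z) * (x + y + z) = x + y - z := by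
    field_simp
    ring
  have hzy_comb : y / (y + z) * (x - y - z) + z / (y + z) * (x + y + z) = x - y + z := by
    field_simp
    ring
  have hleft := hf.2 hsub hadd hne hwz hwy (by rwa [add_comm])
  have hright := hf.2 hsub hadd hne hwy hwz hw
  simp only [smul_eq_mul, hyz_comb, hzy_comb] at hleft hright
  unfold mixedDiff
  linear_combination hleft + hright + (f (x - y - z) + f (x + y + z)) * hw

theorem mixedDiff_neg_of_antitoneOn (hodd : f.Odd) (hanti : AntitoneOn f (Set.Ioi 0))
    (hpos : ∀ t, 0 < t → 0 < f t) (hx : x < y + z) (hy : y < z + x) (hz : z < x + y) :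
    mixedDiff f x y z < 0 := by
  have hfirst : f (x + y + z) ≤ f (x + y - z) :=
    hanti (Set.mem_Ioi.2 (by linarith)) (Set.mem_Ioi.2 (by linarith)) (by linarith)
  have hthird : 0 < f (x - y + z) := hpos _ (by linarith)
  have hfourth : 0 < f (y + z - x) := hpos _ (by linarith)
  have hreflect : f (x - y - z) = -f (y + z - x) := by
    rw [← hodd]
    congr 1
    ring
  unfold mixedDiff
  linarith

end MixedDiff

section SignedRpow

/-- The odd extension to `ℝ` of the power `x ↦ x ^ p` on `(0, ∞)`, i.e. `|x|^p sgn x`; its value at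
`0` is `0` for every `p`. The bracket in `F_q` is built from the exponent `p = -q`. -/
noncomputable def signedRpow (p x : ℝ) : ℝ :=
  |x| ^ p * Real.sign x

variable {p x : ℝ}

theorem signedRpow_of_pos (hx : 0 < x) : signedRpow p x = x ^ p := by
  rw [signedRpow, abs_of_pos hx, Real.sign_of_pos hx, mul_one]

theorem odd_signedRpow (p : ℝ) : (signedRpow p).Odd := fun x => by
  rw [signedRpow, signedRpow, abs_neg, Real.sign_neg, mul_neg]

theorem signedRpow_pos (hx : 0 < x) : 0 < signedRpow p x :=
  (Real.rpow_pos_of_pos hx p).trans_eq (signedRpow_of_pos hx).symm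

theorem antitoneOn_signedRpow (hp : p ≤ 0) : AntitoneOn (signedRpow p) (Set.Ioi 0) :=
  (Real.antitoneOn_rpow_Ioi_of_exponent_nonpos hp).congr fun _ hx => (signedRpow_of_pos hx).symm

theorem strictConvexOn_rpow_of_neg (hp : p < 0) :
    StrictConvexOn ℝ (Set.Ioi 0) fun x : ℝ => x ^ p := by
  refine StrictMonoOn.strictConvexOn_of_deriv (convex_Ioi 0)
    (fun x hx => (Real.continuousAt_rpow_const x p (.inl hx.ne')).continuousWithinAt) ?_
  rw [interior_Ioi]
  intro x hx y _ hxy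
  rw [Real.deriv_rpow_const, Real.deriv_rpow_const]
  exact mul_lt_mul_of_neg_left (Real.rpow_lt_rpow_of_neg hx hxy (by linarith)) hp

theorem strictConvexOn_signedRpow (hp : p < 0) :
    StrictConvexOn ℝ (Set.Ioi 0) (signedRpow p) :=
  (strictConvexOn_rpow_of_neg hp).congr fun _ hx => (signedRpow_of_pos hx).symm

end SignedRpow

theorem cq_ne_zero {q : ℝ} (hq : -1 < q) (hqe : ∀ m : ℕ, q ≠ 2 * m) : cq q ≠ 0 := by
  have hden : Real.Gamma (-q / 2) ≠ 0 := Real.Gamma_ne_zero fun m hm => hqe m (by linarith)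
  have hnum : 0 < Real.Gamma ((q + 1) / 2) := Real.Gamma_pos_of_pos (by linarith)
  exact div_ne_zero (by positivity) hden

section Fq

variable {q : ℝ} {ξ : Fin 3 → ℝ}

theorem Fq_eq_mixedDiff (q : ℝ) (ξ : Fin 3 → ℝ) :
    Fq q ξ = -(cq q / (2 * (ξ 0 * ξ 1 * ξ 2))) *
      mixedDiff (signedRpow (-q)) (ξ 0) (ξ 1) (ξ 2) :=
  rfl

theorem cq_mul_Fq (q : ℝ) (ξ : Fin 3 → ℝ) :
    cq q * Fq q ξ = -(cq q ^ 2 / (2 * (ξ 0 * ξ 1 * ξ 2)) *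
      mixedDiff (signedRpow (-q)) (ξ 0) (ξ 1) (ξ 2)) := by
  rw [Fq_eq_mixedDiff]
  ring

theorem cq_mul_Fq_neg_of_add_lt (hq : 0 < q) (hc : cq q ≠ 0) (h₁ : 0 < ξ 1) (h₂ : 0 < ξ 2)
    (h : ξ 1 + ξ 2 < ξ 0) : cq q * Fq q ξ < 0 := by
  have h₀ : 0 < ξ 0 := by linarith
  have hdiff : 0 < mixedDiff (signedRpow (-q)) (ξ 0) (ξ 1) (ξ 2) :=
    mixedDiff_pos_of_strictConvexOn (strictConvexOn_signedRpow (neg_lt_zero.2 hq)) h₁ h₂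
      (Set.mem_Ioi.2 (by linarith)) (Set.mem_Ioi.2 (by linarith))
  rw [cq_mul_Fq]
  exact neg_lt_zero.2 (by positivity)

theorem cq_mul_Fq_pos_of_triangle (hq : 0 ≤ q) (hc : cq q ≠ 0) (h₀ : ξ 0 < ξ 1 + ξ 2)
    (h₁ : ξ 1 < ξ 2 + ξ 0) (h₂ : ξ 2 < ξ 0 + ξ 1) : 0 < cq q * Fq q ξ := by
  have hξ₀ : 0 < ξ 0 := by linarith
  have hξ₁ : 0 < ξ 1 := by linarith
  have hξ₂ : 0 < ξ 2 := by linarith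
  have hdiff : mixedDiff (signedRpow (-q)) (ξ 0) (ξ 1) (ξ 2) < 0 :=
    mixedDiff_neg_of_antitoneOn (odd_signedRpow _) (antitoneOn_signedRpow (neg_nonpos.2 hq))
      (fun _ => signedRpow_pos) h₀ h₁ h₂
  rw [cq_mul_Fq]
  exact neg_pos.2 (mul_neg_of_pos_of_neg (by positivity) hdiff)

theorem Fq_mul_Fq_neg {η : Fin 3 → ℝ} (hξ : cq q * Fq q ξ < 0) (hη : 0 < cq q * Fq q η) :
    Fq q ξ * Fq q η < 0 := by
  have hprod : cq q ^ 2 * (Fq q ξ * Fq q η) < 0 := by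
    linear_combination mul_neg_of_neg_of_pos hξ hη
  exact neg_of_mul_neg_right hprod (sq_nonneg _)

end Fq

theorem mem_Gset3_of_add_lt {ξ : Fin 3 → ℝ} (h₁ : 0 < ξ 1) (h₂ : 0 < ξ 2)
    (h : ξ 1 + ξ 2 < ξ 0) : ξ ∈ Gset3 := by
  refine ⟨fun k => ?_, fun δ => ?_⟩
  · fin_cases k <;> (apply ne_of_gt; dsimp; linarith)
  · rw [Fin.sum_univ_three]
    split_ifs <;> intro h0 <;> linarith

theorem mem_Gset3_of_triangle {ξ : Fin 3 → ℝ} (h₀ : ξ 0 < ξ 1 + ξ 2)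
    (h₁ : ξ 1 < ξ 2 + ξ 0) (h₂ : ξ 2 < ξ 0 + ξ 1) : ξ ∈ Gset3 := by
  refine ⟨fun k => ?_, fun δ => ?_⟩
  · fin_cases k <;> (apply ne_of_gt; dsimp; linarith)
  · rw [Fin.sum_univ_three]
    split_ifs <;> intro h0 <;> linarith

/-- `F_q` changes sign on `G`: the points `(3,1,1)` and `(3,2,2)` lie in `G`
and `F_q` takes values of opposite signs there. -/
theorem stmt16 (q : ℝ) (hq : 0 < q) (hqe : ∀ m : ℕ, q ≠ 2 * m) :
    (![3, 1, 1] : Fin 3 → ℝ) ∈ Gset3 ∧ (![3, 2, 2] : Fin 3 → ℝ) ∈ Gset3 ∧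
      Fq q ![3, 1, 1] * Fq q ![3, 2, 2] < 0 := by
  have hc : cq q ≠ 0 := cq_ne_zero (by linarith) hqe
  refine ⟨mem_Gset3_of_add_lt ?_ ?_ ?_, mem_Gset3_of_triangle ?_ ?_ ?_,
    Fq_mul_Fq_neg (cq_mul_Fq_neg_of_add_lt hq hc ?_ ?_ ?_)
      (cq_mul_Fq_pos_of_triangle hq.le hc ?_ ?_ ?_)⟩ <;>
    simp only [Matrix.cons_val] <;> norm_num
end

section
/- For every q with 0 < q < 1 and all real numbers x and y, max(|x|, |y|)^q = (1/(2π)) cot(πq/2) ∫_ℝ |x + yξ|^q · (|ξ−1|^{−q} − |ξ+1|^{−q})/ξ dξ, where the integral converges absolutely. In particular, γ(dξ) = (|ξ−1|^{−q} − |ξ+1|^{−q})/ξ dξ is a finite nonnegative measure on ℝ and the above is a Levy representation of the q-norm of ℓ_∞². -/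
open MeasureTheory

/-!
Against the Haar measure `dξ / |ξ|` of `ℝˣ`, the integrand is the absolute difference of the `q`-th
powers of `f ξ = |x + y * ξ| / |ξ - 1|` and `g ξ = |x + y * ξ| / |ξ + 1|`. Homogeneity and the
inversion `ξ ↦ ξ⁻¹`, which preserves the Haar measure and exchanges `x` and `y`, reduce the problem
to `x = 1` and `|y| ≤ 1`. The layer-cake formula then leads to the measure of the set where exactly
one of `s < f ξ` and `s < g ξ` holds. Up to a null set this is the symmetric difference of
`|1 - (s - y) * ξ| < s` and `|1 + (s + y) * ξ| < s`, whose measure `2 * log ((1 + s) / |1 - s|)` no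
longer depends on `y`. The integral is therefore a Mellin transform of this logarithm, and expanding
the logarithm in powers of `s` on `(0, 1)`, and of `s⁻¹` on `(1, ∞)`, turns it into the partial
fraction series of the tangent.
-/

section Levy

open Set Real
open scoped ENNReal symmDiff

/-! ### The partial fraction series of the tangent -/

lemma hasSum_pi_mul_cot_sub_one_div {z : ℂ} (hz : z ∈ Complex.integerComplement) :
    HasSum (fun n : ℕ => 1 / (z - (n + 1)) + 1 / (z + (n + 1)))
      (π * Complex.cot (π * z) - 1 / z) := by
  rw [cot_series_rep' hz]
  exact (summable_cotTerm hz).hasSum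

lemma half_mem_integerComplement {z : ℂ} (hz : z ∈ Complex.integerComplement) :
    z / 2 ∈ Complex.integerComplement := by
  rintro ⟨n, hn⟩
  exact hz ⟨n * 2, by push_cast; rw [hn, div_mul_cancel₀ z two_ne_zero]⟩

lemma tan_half_eq_cot_half_sub_two_mul_cot {w : ℂ} (hw : Complex.sin w ≠ 0) :
    Complex.tan (w / 2) = Complex.cot (w / 2) - 2 * Complex.cot w := by
  have hsin : Complex.sin w = 2 * Complex.sin (w / 2) * Complex.cos (w / 2) := by
    rw [← Complex.sin_two_mul, mul_div_cancel₀ w two_ne_zero]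
  have hcos : Complex.cos w = Complex.cos (w / 2) ^ 2 - Complex.sin (w / 2) ^ 2 := by
    rw [← Complex.cos_two_mul', mul_div_cancel₀ w two_ne_zero]
  rw [hsin] at hw
  have hs : Complex.sin (w / 2) ≠ 0 := fun h => hw (by rw [h]; ring)
  have hc : Complex.cos (w / 2) ≠ 0 := fun h => hw (by rw [h]; ring)
  rw [Complex.tan_eq_sin_div_cos, Complex.cot, Complex.cot, hsin, hcos]
  field_simp
  ring

-- The poles at even integers contribute half the cotangent series at `z / 2`.
lemma hasSum_complex_tan {z : ℂ} (hz : z ∈ Complex.integerComplement) :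
    HasSum (fun k : ℕ => 2 * z / ((2 * k + 1) ^ 2 - z ^ 2))
      (π / 2 * Complex.tan (π * z / 2)) := by
  set u : ℕ → ℂ := fun n => 1 / (z - (n + 1)) + 1 / (z + (n + 1)) with hu
  have hall : HasSum u (π * Complex.cot (π * z) - 1 / z) := hasSum_pi_mul_cot_sub_one_div hz
  have hodd : HasSum (fun k : ℕ => u (2 * k + 1))
      (1 / 2 * (π * Complex.cot (π * (z / 2)) - 1 / (z / 2))) := by
    refine ((hasSum_pi_mul_cot_sub_one_div (half_mem_integerComplement hz)).mul_left
      (1 / 2)).congr_fun fun k => ?_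
    rw [hu]
    push_cast
    rw [show z - (2 * (k : ℂ) + 1 + 1) = 2 * (z / 2 - (k + 1)) by ring,
      show z + (2 * (k : ℂ) + 1 + 1) = 2 * (z / 2 + (k + 1)) by ring, mul_add (1 / 2),
      one_div_mul_one_div, one_div_mul_one_div]
  have heven : HasSum (fun k : ℕ => u (2 * k)) (-(π / 2 * Complex.tan (π * z / 2))) := by
    have hsummable : Summable fun k : ℕ => u (2 * k) :=
      hall.summable.comp_injective (mul_right_injective₀ two_ne_zero)
    convert hsummable.hasSum using 1
    rw [tan_half_eq_cot_half_sub_two_mul_cot (sin_pi_mul_ne_zero hz),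
      eq_sub_of_add_eq ((hsummable.hasSum.even_add_odd hodd).unique hall), mul_div_assoc,
      one_div_div]
    ring
  refine (neg_neg (π / 2 * Complex.tan (π * z / 2)) ▸ heven.neg).congr_fun fun k => ?_
  have hsub : z - (2 * k + 1) ≠ 0 := by
    simpa [sub_eq_add_neg] using Complex.integerComplement_add_ne_zero hz (-(2 * k + 1))
  have hadd : z + (2 * k + 1) ≠ 0 := by
    simpa using Complex.integerComplement_add_ne_zero hz (2 * k + 1)
  have hsq : (2 * (k : ℂ) + 1) ^ 2 - z ^ 2 = -((z - (2 * k + 1)) * (z + (2 * k + 1))) := by ring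
  rw [hu, hsq]
  push_cast
  field_simp
  ring

lemma hasSum_tan {q : ℝ} (hq : (q : ℂ) ∈ Complex.integerComplement) :
    HasSum (fun k : ℕ => 2 * q / ((2 * k + 1) ^ 2 - q ^ 2)) (π / 2 * tan (π * q / 2)) := by
  exact_mod_cast hasSum_complex_tan hq

lemma ofReal_mem_integerComplement {q : ℝ} (hq0 : q ≠ 0) (hq1 : |q| < 1) :
    (q : ℂ) ∈ Complex.integerComplement := by
  rintro ⟨n, hn⟩
  have hn' : (n : ℝ) = q := by exact_mod_cast hn
  rw [← hn'] at hq0 hq1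
  have hn1 : |n| < 1 := by exact_mod_cast hq1
  exact hq0 (by exact_mod_cast Int.abs_lt_one_iff.1 hn1)

/-! ### The multiplicative Haar measure of the real line -/

/-- The Haar measure `dξ / |ξ|` of the multiplicative group `ℝˣ`, as a measure on `ℝ`. It is used
for its invariance under inversion and dilations. -/
noncomputable def mulHaar : Measure ℝ := volume.withDensity fun ξ => ENNReal.ofReal |ξ|⁻¹

instance : SFinite mulHaar := inferInstanceAs (SFinite (volume.withDensity _))

instance : NullSingletonClass mulHaar :=
  inferInstanceAs (NullSingletonClass (volume.withDensity _))

lemma mulHaar_absolutelyContinuous : mulHaar ≪ volume :=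
  withDensity_absolutelyContinuous _ _

lemma setLIntegral_mulHaar {f : ℝ → ℝ≥0∞} (hf : Measurable f) {S : Set ℝ} (hS : MeasurableSet S) :
    ∫⁻ ξ in S, f ξ ∂mulHaar = ∫⁻ ξ in S, ENNReal.ofReal |ξ|⁻¹ * f ξ :=
  setLIntegral_withDensity_eq_setLIntegral_mul _ (by fun_prop) hf hS

lemma measurePreserving_mulHaar {g g' : ℝ → ℝ} (hg : Measurable g)
    (hderiv : ∀ ξ ≠ 0, HasDerivAt g (g' ξ) ξ) (hbij : BijOn g {0}ᶜ {0}ᶜ)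
    (hlog : ∀ ξ ≠ 0, |g' ξ| * |g ξ|⁻¹ = |ξ|⁻¹) : MeasurePreserving g mulHaar mulHaar := by
  refine ⟨hg, Measure.ext fun S hS => ?_⟩
  have hdrop : ∀ T, mulHaar (T ∩ {0}ᶜ) = mulHaar T := fun T =>
    measure_inter_conull (by rw [compl_compl, measure_singleton])
  have himage : g '' (g ⁻¹' S ∩ {0}ᶜ) = S ∩ {0}ᶜ := by
    rw [image_preimage_inter, hbij.image_eq]
  have hT : MeasurableSet (g ⁻¹' S ∩ {0}ᶜ) := (hg hS).inter (measurableSet_singleton 0).compl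
  rw [Measure.map_apply hg hS, ← hdrop (g ⁻¹' S), ← hdrop S, ← himage, mulHaar,
    withDensity_apply _ hT, withDensity_apply',
    lintegral_image_eq_lintegral_abs_deriv_mul hT
      (fun ξ hξ => (hderiv ξ hξ.2).hasDerivWithinAt) (hbij.injOn.mono inter_subset_right)]
  refine setLIntegral_congr_fun hT fun ξ hξ => ?_
  rw [← ENNReal.ofReal_mul (abs_nonneg _), hlog ξ hξ.2]

lemma measurePreserving_inv_mulHaar : MeasurePreserving (·⁻¹) mulHaar mulHaar := by
  refine measurePreserving_mulHaar measurable_inv (fun ξ hξ => hasDerivAt_inv hξ)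
    (BijOn.mk (fun ξ hξ => inv_ne_zero hξ) inv_injective.injOn
      fun ξ hξ => ⟨ξ⁻¹, inv_ne_zero hξ, inv_inv ξ⟩) fun ξ hξ => ?_
  rw [abs_neg, abs_inv, abs_inv, abs_pow, inv_inv]
  field_simp

lemma measurePreserving_mul_left_mulHaar {c : ℝ} (hc : c ≠ 0) :
    MeasurePreserving (c * ·) mulHaar mulHaar := by
  refine measurePreserving_mulHaar (measurable_const_mul c)
    (fun ξ _ => by simpa using (hasDerivAt_id ξ).const_mul c)
    (BijOn.mk (fun ξ hξ => mul_ne_zero hc hξ) (mul_right_injective₀ hc).injOn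
      fun ξ hξ => ⟨c⁻¹ * ξ, mul_ne_zero (inv_ne_zero hc) hξ, mul_inv_cancel_left₀ hc ξ⟩)
    fun ξ _ => ?_
  rw [abs_mul, mul_inv, mul_inv_cancel_left₀ (abs_ne_zero.2 hc)]

lemma mulHaar_Ico {p r : ℝ} (hp : 0 < p) (hpr : p ≤ r) :
    mulHaar (Ico p r) = ENNReal.ofReal (log (r / p)) := by
  have hnonneg : 0 ≤ᵐ[volume.restrict (Ioc p r)] fun ξ : ℝ => ξ⁻¹ := by
    filter_upwards [ae_restrict_mem measurableSet_Ioc] with ξ hξ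
    exact inv_nonneg.2 (hp.trans hξ.1).le
  have hint : IntegrableOn (fun ξ : ℝ => ξ⁻¹) (Ioc p r) :=
    (intervalIntegral.intervalIntegrable_inv (fun ξ hξ => ne_of_gt
      (hp.trans_le (uIcc_of_le hpr ▸ hξ).1)) continuousOn_id).1
  rw [measure_congr (Ioo_ae_eq_Ico.symm.trans Ioo_ae_eq_Ioc),
    ← integral_inv_of_pos hp (hp.trans_le hpr), intervalIntegral.integral_of_le hpr,
    ofReal_integral_eq_lintegral_ofReal hint hnonneg, mulHaar,
    withDensity_apply _ measurableSet_Ioc]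
  refine setLIntegral_congr_fun measurableSet_Ioc fun ξ hξ => ?_
  rw [abs_of_pos (hp.trans hξ.1)]

/-! ### A layer-cake formula for differences of powers -/

lemma lintegral_Ico_mul_rpow {q u v : ℝ} (hq : 0 < q) (hu : 0 ≤ u) (huv : u ≤ v) :
    ∫⁻ s in Ico u v, ENNReal.ofReal (q * s ^ (q - 1)) = ENNReal.ofReal (v ^ q - u ^ q) := by
  have hint : IntegrableOn (fun s : ℝ => q * s ^ (q - 1)) (Ioc u v) :=
    ((intervalIntegral.intervalIntegrable_rpow' (by linarith)).const_mul q).1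
  have hnonneg : 0 ≤ᵐ[volume.restrict (Ioc u v)] fun s : ℝ => q * s ^ (q - 1) := by
    filter_upwards [ae_restrict_mem measurableSet_Ioc] with s hs
    exact mul_nonneg hq.le (rpow_nonneg (hu.trans hs.1.le) _)
  rw [setLIntegral_congr (Ioo_ae_eq_Ico.symm.trans Ioo_ae_eq_Ioc),
    ← ofReal_integral_eq_lintegral_ofReal hint hnonneg, ← intervalIntegral.integral_of_le huv,
    intervalIntegral.integral_const_mul, integral_rpow (Or.inl (by linarith)), sub_add_cancel,
    mul_div_cancel₀ _ hq.ne']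

lemma symmDiff_Iio {α : Type*} [LinearOrder α] (u v : α) :
    Iio u ∆ Iio v = Ico (min u v) (max u v) := by
  ext s
  simp only [mem_symmDiff, mem_Iio, mem_Ico, min_le_iff, lt_max_iff, not_lt]
  constructor
  · rintro (⟨h, h'⟩ | ⟨h, h'⟩) <;> simp [h, h']
  · rintro ⟨h | h, h' | h'⟩ <;> grind

lemma max_rpow_sub_min_rpow {q u v : ℝ} (hq : 0 ≤ q) (hu : 0 ≤ u) (hv : 0 ≤ v) :
    max u v ^ q - min u v ^ q = |u ^ q - v ^ q| := by
  rcases le_total u v with h | h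
  · rw [max_eq_right h, min_eq_left h, abs_sub_comm,
      abs_of_nonneg (sub_nonneg.2 (rpow_le_rpow hu h hq))]
  · rw [max_eq_left h, min_eq_right h, abs_of_nonneg (sub_nonneg.2 (rpow_le_rpow hv h hq))]

lemma lintegral_abs_rpow_sub_rpow {α : Type*} [MeasurableSpace α] {μ : Measure α} [SFinite μ]
    {f g : α → ℝ} (hf : Measurable f) (hg : Measurable g) (hf0 : 0 ≤ f) (hg0 : 0 ≤ g) {q : ℝ}
    (hq : 0 < q) :
    ∫⁻ x, ENNReal.ofReal |f x ^ q - g x ^ q| ∂μ =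
      ∫⁻ s in Ioi 0, μ ({x | s < f x} ∆ {x | s < g x}) * ENNReal.ofReal (q * s ^ (q - 1)) := by
  let E : Set (α × ℝ) := {p | p.2 < f p.1} ∆ {p | p.2 < g p.1}
  have hE : MeasurableSet E :=
    (measurableSet_lt measurable_snd (hf.comp measurable_fst)).symmDiff
      (measurableSet_lt measurable_snd (hg.comp measurable_fst))
  have hfiber : ∀ x, ENNReal.ofReal |f x ^ q - g x ^ q| =
      ∫⁻ s in Ioi 0, E.indicator (fun p => ENNReal.ofReal (q * p.2 ^ (q - 1))) (x, s) := fun x => by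
    have hmin : 0 ≤ min (f x) (g x) := le_min (hf0 x) (hg0 x)
    have hcoe : ∀ s, E.indicator (fun p => ENNReal.ofReal (q * p.2 ^ (q - 1))) (x, s) =
        (Ico (min (f x) (g x)) (max (f x) (g x))).indicator
          (fun s => ENNReal.ofReal (q * s ^ (q - 1))) s := fun s => by
      rw [← symmDiff_Iio]; rfl
    simp_rw [hcoe]
    rw [setLIntegral_congr Ioi_ae_eq_Ici, setLIntegral_indicator measurableSet_Ico,
      inter_eq_left.2 fun s hs => mem_Ici.2 (hmin.trans hs.1),
      lintegral_Ico_mul_rpow hq hmin min_le_max, max_rpow_sub_min_rpow hq.le (hf0 x) (hg0 x)]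
  have hslice : ∀ s, ∫⁻ x, E.indicator (fun p => ENNReal.ofReal (q * p.2 ^ (q - 1))) (x, s) ∂μ =
      μ ({x | s < f x} ∆ {x | s < g x}) * ENNReal.ofReal (q * s ^ (q - 1)) := fun s => by
    rw [mul_comm]
    exact lintegral_indicator_const (measurable_prodMk_right (y := s) hE)
      (ENNReal.ofReal (q * s ^ (q - 1)))
  simp_rw [hfiber, ← hslice]
  exact lintegral_lintegral_swap (Measurable.indicator (by fun_prop) hE).aemeasurable

/-! ### The layers of the integrand -/

/-- The preimage of the ball of radius `s` around `1` under multiplication by `c`. The layers of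
`|1 + a * ξ|` relative to `|ξ - 1|` and `|ξ + 1|` are described by two of these sets. -/
def scaledBall (c s : ℝ) : Set ℝ := {ξ | |1 - c * ξ| < s}

lemma measurableSet_scaledBall (c s : ℝ) : MeasurableSet (scaledBall c s) :=
  measurableSet_lt (by fun_prop) measurable_const

lemma scaledBall_eq_preimage_Ioo (c s : ℝ) :
    scaledBall c s = (c * ·) ⁻¹' Ioo (1 - s) (1 + s) := by
  ext ξ
  simp only [scaledBall, mem_ofPred_eq, abs_lt, mem_preimage, mem_Ioo]
  constructor <;> rintro ⟨_, _⟩ <;> constructor <;> linarith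

lemma mulHaar_scaledBall {c s : ℝ} (hc : c ≠ 0) (hs : 0 ≤ s) (hs1 : s < 1) :
    mulHaar (scaledBall c s) = ENNReal.ofReal (log ((1 + s) / (1 - s))) := by
  rw [scaledBall_eq_preimage_Ioo, (measurePreserving_mul_left_mulHaar hc).measure_preimage
    measurableSet_Ioo.nullMeasurableSet, measure_congr Ioo_ae_eq_Ico,
    mulHaar_Ico (sub_pos.2 hs1) (by linarith)]

lemma disjoint_scaledBall {c d s : ℝ} (hcd : c ≠ d) (h : s * (|c| + |d|) ≤ |c - d|) :
    Disjoint (scaledBall c s) (scaledBall d s) := by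
  rw [Set.disjoint_left]
  intro ξ (hc : |1 - c * ξ| < s) (hd : |1 - d * ξ| < s)
  have hpos : 0 < |c| + |d| := (abs_pos.2 (sub_ne_zero.2 hcd)).trans_le (abs_sub c d)
  have : |c - d| < s * (|c| + |d|) := calc
    |c - d| = |c * (1 - d * ξ) - d * (1 - c * ξ)| := by ring_nf
    _ ≤ |c * (1 - d * ξ)| + |d * (1 - c * ξ)| := abs_sub _ _
    _ = |c| * |1 - d * ξ| + |d| * |1 - c * ξ| := by rw [abs_mul, abs_mul]
    _ ≤ max |1 - d * ξ| |1 - c * ξ| * (|c| + |d|) := by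
      rw [mul_comm (max _ _), add_mul]
      gcongr
      · exact le_max_left _ _
      · exact le_max_right _ _
    _ < s * (|c| + |d|) := by gcongr; exact max_lt hd hc
  exact this.not_ge h

lemma scaledBall_diff_scaledBall_neg {c d s : ℝ} (hc : 0 < c) (hd : 0 < d) (hs : 1 < s)
    (h : (s - 1) * d ≤ (1 + s) * c) :
    scaledBall c s \ scaledBall (-d) s = Ico ((s - 1) / d) ((1 + s) / c) := by
  ext ξ
  simp only [scaledBall, mem_sdiff, mem_ofPred_eq, mem_Ico, abs_lt, not_and, not_lt,
    div_le_iff₀ hd, lt_div_iff₀ hc]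
  constructor
  · rintro ⟨⟨h1, h2⟩, h3⟩
    refine ⟨?_, by linarith⟩
    by_contra! h4
    have hlower : -(1 + s) < ξ * d := by
      refine lt_of_mul_lt_mul_right ?_ hc.le
      nlinarith
    have : s ≤ 1 - -d * ξ := h3 (by linarith)
    linarith
  · rintro ⟨h1, h2⟩
    have hξ : 0 < ξ := by nlinarith
    have := mul_pos hc hξ
    exact ⟨⟨by linarith, by linarith⟩, fun _ => by linarith⟩

lemma mulHaar_scaledBall_diff_scaledBall_neg {c d s : ℝ} (hc : 0 < c) (hd : 0 < d) (hs : 1 < s)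
    (h : (s - 1) * c ≤ (1 + s) * d) (h' : (s - 1) * d ≤ (1 + s) * c) :
    mulHaar (scaledBall c s \ scaledBall (-d) s) =
      ENNReal.ofReal (log ((1 + s) / (s - 1) * (d / c))) := by
  rw [scaledBall_diff_scaledBall_neg hc hd hs h',
    mulHaar_Ico (div_pos (sub_pos.2 hs) hd) (by rwa [div_le_div_iff₀ hd hc]), div_div_div_eq,
    div_mul_div_comm, mul_comm c]

lemma mulHaar_symmDiff_scaledBall_neg {c d s : ℝ} (hc : 0 < c) (hd : 0 < d) (hs : 1 < s)
    (h : (s - 1) * c ≤ (1 + s) * d) (h' : (s - 1) * d ≤ (1 + s) * c) :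
    mulHaar (scaledBall c s ∆ scaledBall (-d) s) =
      2 * ENNReal.ofReal (log ((1 + s) / (s - 1))) := by
  have hneg : (-1 * ·) ⁻¹' (scaledBall d s \ scaledBall (-c) s) =
      scaledBall (-d) s \ scaledBall c s := by
    ext ξ
    simp only [mem_preimage, mem_sdiff, scaledBall, mem_ofPred_eq, one_mul, mul_neg, neg_mul,
      neg_neg]
  have hreflect : mulHaar (scaledBall (-d) s \ scaledBall c s) =
      mulHaar (scaledBall d s \ scaledBall (-c) s) := by
    rw [← hneg, (measurePreserving_mul_left_mulHaar (neg_ne_zero.2 one_ne_zero)).measure_preimage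
      ((measurableSet_scaledBall d s).diff (measurableSet_scaledBall (-c) s)).nullMeasurableSet]
  have hlog : ∀ {c d : ℝ}, 0 < c → (s - 1) * c ≤ (1 + s) * d →
      0 ≤ log ((1 + s) / (s - 1) * (d / c)) := fun hc h => by
    refine log_nonneg ?_
    rwa [div_mul_div_comm, one_le_div (mul_pos (sub_pos.2 hs) hc)]
  rw [measure_symmDiff_eq (measurableSet_scaledBall c s).nullMeasurableSet
      (measurableSet_scaledBall (-d) s).nullMeasurableSet, hreflect,
    mulHaar_scaledBall_diff_scaledBall_neg hc hd hs h h',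
    mulHaar_scaledBall_diff_scaledBall_neg hd hc hs h' h,
    ← ENNReal.ofReal_add (hlog hc h) (hlog hd h'), ← ENNReal.ofReal_ofNat 2,
    ← ENNReal.ofReal_mul zero_le_two]
  congr 1
  have hr : (1 + s) / (s - 1) ≠ 0 := div_ne_zero (by linarith) (sub_pos.2 hs).ne'
  rw [log_mul hr (by positivity), log_mul hr (by positivity), log_div hd.ne' hc.ne',
    log_div hc.ne' hd.ne']
  ring

lemma mulHaar_symmDiff_scaledBall_of_lt_one {c d s : ℝ} (hc : c ≠ 0) (hd : d ≠ 0) (hs0 : 0 ≤ s)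
    (hs : s < 1) (hcd : c ≠ d) (h : s * (|c| + |d|) ≤ |c - d|) :
    mulHaar (scaledBall c s ∆ scaledBall d s) = 2 * ENNReal.ofReal (log ((1 + s) / (1 - s))) := by
  have hdisj : Disjoint (scaledBall c s) (scaledBall d s) := disjoint_scaledBall hcd h
  rw [measure_symmDiff_eq (measurableSet_scaledBall c s).nullMeasurableSet
      (measurableSet_scaledBall d s).nullMeasurableSet, hdisj.sdiff_eq_left, hdisj.sdiff_eq_right,
    mulHaar_scaledBall hc hs0 hs, mulHaar_scaledBall hd hs0 hs, two_mul]

-- The dependence on `a` disappears here; for `|a| > 1` it would not.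
lemma mulHaar_symmDiff_scaledBall_sub {a s : ℝ} (ha : |a| ≤ 1) (hs0 : 0 < s) (hs1 : s ≠ 1)
    (hsa : s ≠ |a|) :
    mulHaar (scaledBall (s - a) s ∆ scaledBall (-(s + a)) s) =
      2 * ENNReal.ofReal (log ((1 + s) / |1 - s|)) := by
  obtain ⟨ha1, ha2⟩ := abs_le.1 ha
  rcases hs1.lt_or_gt with hs | hs
  · rw [abs_of_pos (sub_pos.2 hs)]
    have hc : s - a ≠ 0 := fun h => hsa (by rw [← sub_eq_zero.1 h, abs_of_pos hs0])
    have hd : -(s + a) ≠ 0 := fun h => hsa (by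
      rw [show a = -s by linarith, abs_neg, abs_of_pos hs0])
    refine mulHaar_symmDiff_scaledBall_of_lt_one hc hd hs0.le hs (by linarith) ?_
    have hle : |s - a| + |-(s + a)| ≤ 2 := by
      rw [abs_neg]
      rcases abs_cases (s - a) with h | h <;> rcases abs_cases (s + a) with h' | h' <;> linarith
    calc s * (|s - a| + |-(s + a)|) ≤ s * 2 := by gcongr
      _ = |s - a - -(s + a)| := by
        rw [show s - a - -(s + a) = s * 2 by ring, abs_of_pos (by positivity)]
  · rw [abs_of_neg (sub_neg.2 hs), neg_sub]
    exact mulHaar_symmDiff_scaledBall_neg (by linarith) (by linarith) hs (by nlinarith)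
      (by nlinarith)

lemma ae_add_mul_ne_zero {b : ℝ} (hb : b ≠ 0) (c : ℝ) : ∀ᵐ ξ, b + c * ξ ≠ 0 := by
  refine (subsingleton_of_forall_eq (-b / c) fun ξ hξ => ?_).measure_zero _
  have hξ : b + c * ξ = 0 := by simpa using hξ
  have hc : c ≠ 0 := by
    rintro rfl
    exact hb (by linarith)
  field_simp
  linarith

lemma mul_abs_lt_abs_iff {R : Type*} [CommRing R] [LinearOrder R] [IsStrictOrderedRing R]
    {s u v : R} (hs : 0 ≤ s) :
    s * |u| < |v| ↔ 0 < (v + s * u) * (v - s * u) := by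
  rw [← abs_of_nonneg hs, ← abs_mul, abs_of_nonneg hs, ← sq_lt_sq, ← sub_pos, sq_sub_sq]

lemma abs_lt_iff_add_mul_sub_pos {R : Type*} [CommRing R] [LinearOrder R]
    [IsStrictOrderedRing R] {s u : R} (hs : 0 ≤ s) : |u| < s ↔ 0 < (s + u) * (s - u) := by
  rw [← sq_sub_sq, sub_pos, ← sq_abs u, sq_lt_sq₀ (abs_nonneg u) hs]

lemma mul_neg_iff_xor_pos {R : Type*} [Ring R] [LinearOrder R] [IsStrictOrderedRing R]
    {u v : R} (hu : u ≠ 0) (hv : v ≠ 0) :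
    u * v < 0 ↔ 0 < u ∧ ¬0 < v ∨ 0 < v ∧ ¬0 < u := by
  rw [mul_neg_iff, not_lt, not_lt, hv.le_iff_lt, hu.le_iff_lt, and_comm (a := u < 0)]

-- Membership in any of the four sets is the positivity of a product of two of the four linear
-- factors below, and on both sides the two products multiply to the product of all four factors.
lemma symmDiff_layers_ae_eq {s : ℝ} (a : ℝ) (hs : 0 < s) (hs1 : s ≠ 1) :
    ({ξ | s * |ξ - 1| < |1 + a * ξ|} ∆ {ξ | s * |ξ + 1| < |1 + a * ξ|} : Set ℝ) =ᵐ[volume]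
      (scaledBall (s - a) s ∆ scaledBall (-(s + a)) s : Set ℝ) := by
  have hadd : 1 + s ≠ 0 := by positivity
  have hsub : 1 - s ≠ 0 := sub_ne_zero.2 hs1.symm
  refine Filter.eventuallyEq_set.2 ?_
  filter_upwards [ae_add_mul_ne_zero hadd (a - s), ae_add_mul_ne_zero hadd (a + s),
    ae_add_mul_ne_zero hsub (a - s), ae_add_mul_ne_zero hsub (a + s)] with ξ hα hβ hγ hδ
  have hL₁ : s * |ξ - 1| < |1 + a * ξ| ↔
      0 < (1 - s + (a + s) * ξ) * (1 + s + (a - s) * ξ) := by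
    rw [mul_abs_lt_abs_iff hs.le]
    ring_nf
  have hL₂ : s * |ξ + 1| < |1 + a * ξ| ↔
      0 < (1 + s + (a + s) * ξ) * (1 - s + (a - s) * ξ) := by
    rw [mul_abs_lt_abs_iff hs.le]
    ring_nf
  have hB₁ : |1 - (s - a) * ξ| < s ↔
      0 < (1 + s + (a - s) * ξ) * -(1 - s + (a - s) * ξ) := by
    rw [abs_lt_iff_add_mul_sub_pos hs.le]
    ring_nf
  have hB₂ : |1 - -(s + a) * ξ| < s ↔
      0 < (1 + s + (a + s) * ξ) * -(1 - s + (a + s) * ξ) := by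
    rw [abs_lt_iff_add_mul_sub_pos hs.le]
    ring_nf
  simp only [mem_symmDiff, scaledBall, mem_ofPred_eq, hL₁, hL₂, hB₁, hB₂]
  rw [← mul_neg_iff_xor_pos (mul_ne_zero hδ hα) (mul_ne_zero hβ hγ),
    ← mul_neg_iff_xor_pos (mul_ne_zero hα (neg_ne_zero.2 hγ)) (mul_ne_zero hβ (neg_ne_zero.2 hδ))]
  ring_nf

/-! ### The Mellin transform of the logarithm -/

lemma two_mul_natCast_add_one_add_pos {p : ℝ} (hp : -1 < p) (k : ℕ) : 0 < 2 * (k : ℝ) + 1 + p := by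
  have : (0 : ℝ) ≤ k := k.cast_nonneg
  linarith

lemma setLIntegral_Ioo_rpow_mul_log_mulHaar {p : ℝ} (hp : -1 < p) :
    ∫⁻ s in Ioo 0 1, ENNReal.ofReal (s ^ p) * ENNReal.ofReal (log ((1 + s) / |1 - s|)) ∂mulHaar =
      ∑' k : ℕ, ENNReal.ofReal (2 / ((2 * k + 1) * (2 * k + 1 + p))) := by
  have hexp := two_mul_natCast_add_one_add_pos hp
  have hterm : ∀ k : ℕ, ∫⁻ s in Ioo (0 : ℝ) 1,
      ENNReal.ofReal (2 / ((2 * k + 1) * (2 * k + 1 + p))) *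
        ENNReal.ofReal ((2 * k + 1 + p) * s ^ (2 * k + 1 + p - 1)) =
      ENNReal.ofReal (2 / ((2 * k + 1) * (2 * k + 1 + p))) := fun k => by
    rw [lintegral_const_mul _ (by fun_prop), setLIntegral_congr Ioo_ae_eq_Ico,
      lintegral_Ico_mul_rpow (hexp k) le_rfl zero_le_one, one_rpow, zero_rpow (hexp k).ne',
      sub_zero, ENNReal.ofReal_one, mul_one]
  rw [setLIntegral_mulHaar (by fun_prop) measurableSet_Ioo, ← tsum_congr hterm,
    ← lintegral_tsum fun k => by fun_prop]
  refine setLIntegral_congr_fun measurableSet_Ioo fun s hs => ?_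
  obtain ⟨hs0, hs1⟩ := hs
  have hlog := hasSum_log_sub_log_of_abs_lt_one (abs_lt.2 ⟨by linarith, hs1⟩)
  rw [← log_div (by linarith) (by linarith)] at hlog
  rw [abs_of_pos hs0, abs_of_pos (sub_pos.2 hs1), ← hlog.tsum_eq,
    ENNReal.ofReal_tsum_of_nonneg (fun k => by positivity) hlog.summable,
    ← ENNReal.tsum_mul_left, ← ENNReal.tsum_mul_left]
  refine tsum_congr fun k => ?_
  have hk := hexp k
  rw [← ENNReal.ofReal_mul (by positivity), ← ENNReal.ofReal_mul (by positivity),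
    ← ENNReal.ofReal_mul (by positivity)]
  congr 1
  rw [show 2 * (k : ℝ) + 1 + p - 1 = p + (2 * k : ℕ) by push_cast; ring, rpow_add hs0,
    rpow_natCast, pow_succ]
  field_simp

lemma log_one_add_inv_div_abs_one_sub_inv {s : ℝ} (hs : 0 < s) :
    log ((1 + s⁻¹) / |1 - s⁻¹|) = log ((1 + s) / |1 - s|) := by
  rw [show 1 + s⁻¹ = (1 + s) / s by field_simp; ring,
    show 1 - s⁻¹ = -(1 - s) / s by field_simp; ring, abs_div, abs_neg, abs_of_pos hs,
    div_div_div_cancel_right₀ hs.ne']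

lemma setLIntegral_Ioi_one_rpow_mul_log_mulHaar (p : ℝ) :
    ∫⁻ s in Ioi 1, ENNReal.ofReal (s ^ p) * ENNReal.ofReal (log ((1 + s) / |1 - s|)) ∂mulHaar =
      ∫⁻ s in Ioo 0 1,
        ENNReal.ofReal (s ^ (-p)) * ENNReal.ofReal (log ((1 + s) / |1 - s|)) ∂mulHaar := by
  have hpreimage : (·⁻¹) ⁻¹' Ioi (1 : ℝ) = Ioo (0 : ℝ) 1 :=
    Set.ext fun s => one_lt_inv_iff₀ (a := s)
  rw [← measurePreserving_inv_mulHaar.setLIntegral_comp_preimage measurableSet_Ioi (by fun_prop),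
    hpreimage]
  refine setLIntegral_congr_fun measurableSet_Ioo fun s hs => ?_
  simp only [log_one_add_inv_div_abs_one_sub_inv hs.1, inv_rpow hs.1.le, rpow_neg hs.1.le]

lemma setLIntegral_Ioi_rpow_mul_log_mulHaar {q : ℝ} (hq0 : q ≠ 0) (hq1 : |q| < 1) :
    ∫⁻ s in Ioi 0, ENNReal.ofReal (s ^ q) * ENNReal.ofReal (log ((1 + s) / |1 - s|)) ∂mulHaar =
      ENNReal.ofReal (π / q * tan (π * q / 2)) := by
  have hsum := (hasSum_tan (ofReal_mem_integerComplement hq0 hq1)).mul_left (2 / q)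
  rw [show 2 / q * (π / 2 * tan (π * q / 2)) = π / q * tan (π * q / 2) by ring] at hsum
  obtain ⟨hlo, hhi⟩ := abs_lt.1 hq1
  have hadd := two_mul_natCast_add_one_add_pos hlo
  have hsub := two_mul_natCast_add_one_add_pos (neg_lt_neg hhi)
  have hsplit : ∀ k : ℕ, 2 / q * (2 * q / ((2 * k + 1) ^ 2 - q ^ 2)) =
      2 / ((2 * k + 1) * (2 * k + 1 + -q)) + 2 / ((2 * k + 1) * (2 * k + 1 + q)) := fun k => by
    have := (hadd k).ne'
    have := (hsub k).ne'
    rw [show (2 * (k : ℝ) + 1) ^ 2 - q ^ 2 = (2 * k + 1 + q) * (2 * k + 1 + -q) by ring]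
    field_simp
    ring
  simp only [hsplit] at hsum
  rw [← Ioc_union_Ioi_eq_Ioi (zero_le_one' ℝ),
    lintegral_union measurableSet_Ioi Ioc_disjoint_Ioi_same, ← setLIntegral_congr Ioo_ae_eq_Ioc,
    setLIntegral_Ioi_one_rpow_mul_log_mulHaar, setLIntegral_Ioo_rpow_mul_log_mulHaar hlo,
    setLIntegral_Ioo_rpow_mul_log_mulHaar (neg_lt_neg hhi), ← ENNReal.tsum_add, ← hsum.tsum_eq,
    ENNReal.ofReal_tsum_of_nonneg (fun k => ?_) hsum.summable]
  · refine tsum_congr fun k => ?_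
    have := hadd k
    have := hsub k
    rw [add_comm, ENNReal.ofReal_add (by positivity) (by positivity)]
  · have := hadd k
    have := hsub k
    positivity

/-! ### The Levy integral -/

/-- The density of the Levy measure. By the conventions for division by zero and for `rpow`, it is
`0` at `ξ = 0` and, for `q ≠ 0`, negative at `ξ = ±1`. -/
noncomputable def levyDensity (q ξ : ℝ) : ℝ := (|ξ - 1| ^ (-q) - |ξ + 1| ^ (-q)) / ξ

/-- The integral of `|x + y * ξ| ^ q` against the Levy measure, as a Lebesgue integral in `[0, ∞]`.
The factor `|ξ|⁻¹` of the Levy density is absorbed into `mulHaar`, and the product with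
`|ξ - 1| ^ (-q) - |ξ + 1| ^ (-q)` is written as a difference of `q`-th powers. -/
noncomputable def levyLIntegral (q x y : ℝ) : ℝ≥0∞ :=
  ∫⁻ ξ, ENNReal.ofReal |(|x + y * ξ| / |ξ - 1|) ^ q - (|x + y * ξ| / |ξ + 1|) ^ q| ∂mulHaar

lemma mulHaar_symmDiff_lt_div {a s : ℝ} (ha : |a| ≤ 1) (hs0 : 0 < s) (hs1 : s ≠ 1)
    (hsa : s ≠ |a|) :
    mulHaar ({ξ | s < |1 + a * ξ| / |ξ - 1|} ∆ {ξ | s < |1 + a * ξ| / |ξ + 1|}) =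
      2 * ENNReal.ofReal (log ((1 + s) / |1 - s|)) := by
  have hdiv : ({ξ | s < |1 + a * ξ| / |ξ - 1|} ∆ {ξ | s < |1 + a * ξ| / |ξ + 1|} : Set ℝ)
      =ᵐ[volume] ({ξ | s * |ξ - 1| < |1 + a * ξ|} ∆ {ξ | s * |ξ + 1| < |1 + a * ξ|} : Set ℝ) := by
    refine Filter.eventuallyEq_set.2 ?_
    filter_upwards [Measure.ae_ne volume 1, Measure.ae_ne volume (-1)] with ξ h1 h1'
    simp only [mem_symmDiff, mem_ofPred_eq, lt_div_iff₀ (abs_pos.2 (sub_ne_zero.2 h1)),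
      lt_div_iff₀ (abs_pos.2 fun h => h1' (eq_neg_of_add_eq_zero_left h))]
  rw [measure_congr (mulHaar_absolutelyContinuous.ae_le
    (hdiv.trans (symmDiff_layers_ae_eq a hs0 hs1))),
    mulHaar_symmDiff_scaledBall_sub ha hs0 hs1 hsa]

lemma levyLIntegral_one {q a : ℝ} (hq0 : 0 < q) (hq1 : q < 1) (ha : |a| ≤ 1) :
    levyLIntegral q 1 a = ENNReal.ofReal (2 * π * tan (π * q / 2)) := by
  have hmellin : ∀ᵐ s ∂volume.restrict (Ioi 0),
      mulHaar ({ξ | s < |1 + a * ξ| / |ξ - 1|} ∆ {ξ | s < |1 + a * ξ| / |ξ + 1|}) *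
          ENNReal.ofReal (q * s ^ (q - 1)) =
        ENNReal.ofReal (2 * q) * (ENNReal.ofReal |s|⁻¹ *
          (ENNReal.ofReal (s ^ q) * ENNReal.ofReal (log ((1 + s) / |1 - s|)))) := by
    filter_upwards [ae_restrict_mem measurableSet_Ioi,
      ae_restrict_of_ae (Measure.ae_ne volume 1),
      ae_restrict_of_ae (Measure.ae_ne volume |a|)] with s hs0 hs1 hsa
    rw [mulHaar_symmDiff_lt_div ha hs0 hs1 hsa, abs_of_pos (a := s) hs0,
      rpow_sub_one (ne_of_gt hs0), div_eq_mul_inv (s ^ q), ENNReal.ofReal_mul hq0.le,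
      ENNReal.ofReal_mul zero_le_two, ENNReal.ofReal_mul (rpow_nonneg (le_of_lt hs0) q),
      ENNReal.ofReal_ofNat]
    ring
  rw [levyLIntegral, lintegral_abs_rpow_sub_rpow (by fun_prop) (by fun_prop)
      (fun ξ => by positivity) (fun ξ => by positivity) hq0, lintegral_congr_ae hmellin,
    lintegral_const_mul _ (by fun_prop), ← setLIntegral_mulHaar (by fun_prop) measurableSet_Ioi,
    setLIntegral_Ioi_rpow_mul_log_mulHaar hq0.ne' (abs_lt.2 ⟨by linarith, hq1⟩),
    ← ENNReal.ofReal_mul (by positivity)]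
  congr 1
  field_simp

lemma levyLIntegral_mul (q t x y : ℝ) :
    levyLIntegral q (t * x) (t * y) = ENNReal.ofReal (|t| ^ q) * levyLIntegral q x y := by
  rw [levyLIntegral, levyLIntegral, ← lintegral_const_mul _ (by fun_prop)]
  congr with ξ
  have ht : ∀ r, 0 ≤ r → (|t * x + t * y * ξ| / r) ^ q = |t| ^ q * (|x + y * ξ| / r) ^ q :=
    fun r hr => by
      rw [mul_assoc, ← mul_add, abs_mul, mul_div_assoc, mul_rpow (by positivity) (by positivity)]
  rw [ht _ (abs_nonneg _), ht _ (abs_nonneg _), ← mul_sub, abs_mul,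
    abs_of_nonneg (rpow_nonneg (abs_nonneg t) q), ENNReal.ofReal_mul (by positivity)]

lemma levyLIntegral_comm (q x y : ℝ) : levyLIntegral q x y = levyLIntegral q y x := by
  rw [levyLIntegral, levyLIntegral, ← measurePreserving_inv_mulHaar.lintegral_comp (by fun_prop)]
  refine lintegral_congr_ae ?_
  filter_upwards [Measure.ae_ne mulHaar 0] with ξ hξ
  have hξ' : 0 < |ξ| := abs_pos.2 hξ
  have hnum : |x + y * ξ⁻¹| = |y + x * ξ| / |ξ| := by
    rw [← abs_div]
    congr 1
    field_simp
    ring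
  have hsub : |ξ⁻¹ - 1| = |ξ - 1| / |ξ| := by
    rw [abs_sub_comm ξ, ← abs_div]
    congr 1
    field_simp
  have hadd : |ξ⁻¹ + 1| = |ξ + 1| / |ξ| := by
    rw [← abs_div]
    congr 1
    field_simp
    ring
  rw [hnum, hsub, hadd, div_div_div_cancel_right₀ hξ'.ne', div_div_div_cancel_right₀ hξ'.ne']

lemma levyLIntegral_of_le {q x y : ℝ} (hq0 : 0 < q) (hq1 : q < 1) (hyx : |y| ≤ |x|) :
    levyLIntegral q x y = ENNReal.ofReal (2 * π * tan (π * q / 2) * |x| ^ q) := by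
  obtain rfl | hx := eq_or_ne x 0
  · have hy : y = 0 := by simpa using hyx
    simp [levyLIntegral, hy, zero_rpow hq0.ne']
  · have ha : |y / x| ≤ 1 := by rwa [abs_div, div_le_one (abs_pos.2 hx)]
    have hscale := levyLIntegral_mul q x 1 (y / x)
    rw [mul_one, mul_div_cancel₀ y hx, levyLIntegral_one hq0 hq1 ha,
      ← ENNReal.ofReal_mul (by positivity), mul_comm] at hscale
    exact hscale

lemma levyLIntegral_eq {q : ℝ} (hq0 : 0 < q) (hq1 : q < 1) (x y : ℝ) :
    levyLIntegral q x y = ENNReal.ofReal (2 * π * tan (π * q / 2) * max |x| |y| ^ q) := by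
  rcases le_total |y| |x| with h | h
  · rw [levyLIntegral_of_le hq0 hq1 h, max_eq_left h]
  · rw [levyLIntegral_comm, levyLIntegral_of_le hq0 hq1 h, max_eq_right h]

lemma measurable_levyDensity (q : ℝ) : Measurable (levyDensity q) := by
  unfold levyDensity
  fun_prop

lemma levyDensity_nonneg {q ξ : ℝ} (hq : 0 ≤ q) (h1 : ξ ≠ 1) (h1' : ξ ≠ -1) :
    0 ≤ levyDensity q ξ := by
  have hsub : 0 < |ξ - 1| := abs_pos.2 (sub_ne_zero.2 h1)
  have hadd : 0 < |ξ + 1| := abs_pos.2 fun h => h1' (eq_neg_of_add_eq_zero_left h)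
  rcases le_total 0 ξ with hξ | hξ
  · have hle : |ξ - 1| ≤ |ξ + 1| := sq_le_sq.1 (by linarith)
    exact div_nonneg (sub_nonneg.2 (rpow_le_rpow_of_nonpos hsub hle (neg_nonpos.2 hq))) hξ
  · have hle : |ξ + 1| ≤ |ξ - 1| := sq_le_sq.1 (by linarith)
    exact div_nonneg_of_nonpos
      (sub_nonpos.2 (rpow_le_rpow_of_nonpos hadd hle (neg_nonpos.2 hq))) hξ

lemma abs_rpow_mul_levyDensity {c : ℝ} (hc : 0 ≤ c) (q ξ : ℝ) :
    |c ^ q * levyDensity q ξ| = |ξ|⁻¹ * |(c / |ξ - 1|) ^ q - (c / |ξ + 1|) ^ q| := by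
  rw [levyDensity, div_rpow hc (abs_nonneg _), div_rpow hc (abs_nonneg _),
    rpow_neg (abs_nonneg _), rpow_neg (abs_nonneg _), ← abs_inv, ← abs_mul]
  ring_nf

lemma ae_rpow_mul_levyDensity_nonneg {q : ℝ} (hq : 0 ≤ q) (x y : ℝ) :
    ∀ᵐ ξ, 0 ≤ |x + y * ξ| ^ q * levyDensity q ξ := by
  filter_upwards [Measure.ae_ne volume 1, Measure.ae_ne volume (-1)] with ξ h1 h1'
  exact mul_nonneg (by positivity) (levyDensity_nonneg hq h1 h1')

lemma lintegral_rpow_mul_levyDensity {q : ℝ} (hq : 0 ≤ q) (x y : ℝ) :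
    ∫⁻ ξ, ENNReal.ofReal (|x + y * ξ| ^ q * levyDensity q ξ) = levyLIntegral q x y := by
  rw [levyLIntegral, mulHaar, lintegral_withDensity_eq_lintegral_mul _ (by fun_prop) (by fun_prop)]
  refine lintegral_congr_ae ?_
  filter_upwards [ae_rpow_mul_levyDensity_nonneg hq x y] with ξ hξ
  rw [← abs_of_nonneg hξ, abs_rpow_mul_levyDensity (abs_nonneg _),
    ENNReal.ofReal_mul (by positivity), Pi.mul_apply]

lemma aestronglyMeasurable_rpow_mul_levyDensity (q x y : ℝ) :
    AEStronglyMeasurable (fun ξ => |x + y * ξ| ^ q * levyDensity q ξ) volume := by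
  have := measurable_levyDensity q
  exact Measurable.aestronglyMeasurable (by fun_prop)

lemma tan_pi_mul_div_two_pos {q : ℝ} (hq0 : 0 < q) (hq1 : q < 1) : 0 < tan (π * q / 2) :=
  tan_pos_of_pos_of_lt_pi_div_two (by positivity) (by nlinarith [pi_pos])

lemma integrable_rpow_mul_levyDensity {q : ℝ} (hq0 : 0 < q) (hq1 : q < 1) (x y : ℝ) :
    Integrable fun ξ => |x + y * ξ| ^ q * levyDensity q ξ := by
  rw [← lintegral_ofReal_ne_top_iff_integrable (aestronglyMeasurable_rpow_mul_levyDensity q x y)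
      (ae_rpow_mul_levyDensity_nonneg hq0.le x y),
    lintegral_rpow_mul_levyDensity hq0.le, levyLIntegral_eq hq0 hq1]
  exact ENNReal.ofReal_ne_top

lemma integral_rpow_mul_levyDensity {q : ℝ} (hq0 : 0 < q) (hq1 : q < 1) (x y : ℝ) :
    ∫ ξ, |x + y * ξ| ^ q * levyDensity q ξ = 2 * π * tan (π * q / 2) * max |x| |y| ^ q := by
  have htan : 0 < tan (π * q / 2) := tan_pi_mul_div_two_pos hq0 hq1
  rw [integral_eq_lintegral_of_nonneg_ae (ae_rpow_mul_levyDensity_nonneg hq0.le x y)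
      (aestronglyMeasurable_rpow_mul_levyDensity q x y),
    lintegral_rpow_mul_levyDensity hq0.le, levyLIntegral_eq hq0 hq1,
    ENNReal.toReal_ofReal (by positivity)]

end Levy

/-- The Levy representation (6) of the `q`-norm of `ℓ_∞²` for `0 < q < 1`:
`max(|x|,|y|)^q = (1/(2π)) cot(πq/2) ∫ |x + yξ|^q (|ξ−1|^{−q} − |ξ+1|^{−q})/ξ dξ`,
the integral converging absolutely, the density being integrable and
nonnegative (away from `±1`, where the rpow convention gives a junk value),
so that it defines a finite nonnegative measure on `ℝ`. -/
theorem stmt17 (q : ℝ) (hq0 : 0 < q) (hq1 : q < 1) (x y : ℝ) :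
    ((max |x| |y|) ^ q =
      (1 / (2 * Real.pi)) * Real.cot (Real.pi * q / 2) *
        ∫ ξ : ℝ, |x + y * ξ| ^ q * ((|ξ - 1| ^ (-q) - |ξ + 1| ^ (-q)) / ξ)) ∧
    Integrable (fun ξ : ℝ =>
      |x + y * ξ| ^ q * ((|ξ - 1| ^ (-q) - |ξ + 1| ^ (-q)) / ξ)) volume ∧
    Integrable (fun ξ : ℝ => (|ξ - 1| ^ (-q) - |ξ + 1| ^ (-q)) / ξ) volume ∧
    ∀ ξ : ℝ, ξ ≠ 1 → ξ ≠ -1 → 0 ≤ (|ξ - 1| ^ (-q) - |ξ + 1| ^ (-q)) / ξ := by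
  have htan : Real.tan (Real.pi * q / 2) ≠ 0 := (tan_pi_mul_div_two_pos hq0 hq1).ne'
  have hval := integral_rpow_mul_levyDensity hq0 hq1 x y
  simp only [levyDensity] at hval
  refine ⟨?_, integrable_rpow_mul_levyDensity hq0 hq1 x y, ?_,
    fun ξ => levyDensity_nonneg hq0.le⟩
  · rw [hval, ← Real.tan_inv_eq_cot]
    field_simp
  · simpa [levyDensity] using integrable_rpow_mul_levyDensity hq0 hq1 1 0
end
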